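/- arXiv:1107.3055 — 3 statements merged into one kernel-verified Lean document; each statement's English description precedes it below -/
import Mathlib

section
/- Let p > 5 be a prime and λ ∈ X. If there exist two distinct positive roots γ₁ ≠ γ₂ of G₂ with p ∣ ⟨λ+ρ, γ₁∨⟩ and p ∣ ⟨λ+ρ, γ₂∨⟩, then p divides ⟨λ+ρ, γ∨⟩ for every positive root γ; equivalently λ + ρ ∈ pX, i.e., λ is a special weight. (This is the paper's assertion that, for p > 5, any weight lying in a 0-facette belongs to −ρ + pX.) -/
namespace G2

/-- The weight lattice of G₂, in coordinates w.r.t. the fundamental weights ω_α, ω_β. -/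
abbrev X : Type := ℤ × ℤ

/-- Half the sum of the positive roots, ρ = ω_α + ω_β. -/
def ρ : X := (1, 1)

/-- The six positive roots of G₂, in order α, β, α+β, 2α+β, 3α+β, 3α+2β. -/
def root : Fin 6 → X := ![(2, -1), (-3, 2), (-1, 1), (1, 0), (3, -1), (0, 1)]

/-- Coefficients of the coroot pairings: ⟨(x,y), γᵢ∨⟩ = aᵢ·x + bᵢ·y. -/
def coroot : Fin 6 → X := ![(1, 0), (0, 1), (1, 3), (2, 3), (1, 1), (1, 2)]

/-- The coroot pairing ⟨v, γᵢ∨⟩. -/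
def pair (i : Fin 6) (v : X) : ℤ := (coroot i).1 * v.1 + (coroot i).2 * v.2

def sMap : X → X := fun v => (-v.1, v.1 + v.2)

def tMap : X → X := fun v => (v.1 + 3 * v.2, -v.2)

/-- The simple reflection s = s_α. -/
def s : Equiv.Perm X :=
  ⟨sMap, sMap, fun v => by obtain ⟨a, b⟩ := v; simp [sMap],
    fun v => by obtain ⟨a, b⟩ := v; simp [sMap]⟩

/-- The simple reflection t = s_β. -/
def t : Equiv.Perm X :=
  ⟨tMap, tMap, fun v => by obtain ⟨a, b⟩ := v; simp [tMap, Prod.ext_iff],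
    fun v => by obtain ⟨a, b⟩ := v; simp [tMap, Prod.ext_iff]⟩

/-- The Weyl group W of G₂, generated by s and t. -/
def W : Subgroup (Equiv.Perm X) := Subgroup.closure {s, t}

/-- The dot action w·λ = w(λ+ρ) − ρ. -/
def dot (w : Equiv.Perm X) (l : X) : X := w (l + ρ) - ρ

/-- m·λ = m(λ+ρ) − ρ for an integer m. -/
def mdot (m : ℤ) (l : X) : X := m • (l + ρ) - ρ

/-- Dominant weights. -/
def dominant (l : X) : Prop := 0 ≤ l.1 ∧ 0 ≤ l.2

/-- Regular weights: no coroot pairing of λ+ρ vanishes. -/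
def regular (l : X) : Prop := ∀ i : Fin 6, pair i (l + ρ) ≠ 0

/-- The length of w: minimal length of a word in s,t expressing w. -/
noncomputable def len (w : Equiv.Perm X) : ℕ :=
  sInf {n | ∃ l : List (Equiv.Perm X),
    (∀ g ∈ l, g = s ∨ g = t) ∧ l.length = n ∧ l.prod = w}

/-- The set Pₙ of weights in the lowest pⁿ-alcoves. -/
def P (p : ℤ) (n : ℕ) : Set X := {l | ∀ i : Fin 6, |pair i (l + ρ)| < p ^ n}

/-- The set X_{pⁿ} of pⁿ-restricted dominant weights. -/
def Xpn (p : ℤ) (n : ℕ) : Set X :=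
  {l | dominant l ∧ pair 0 l < p ^ n ∧ pair 1 l < p ^ n}

/-- The bottom dominant alcove A₁. -/
def A1 (p : ℤ) : Set X :=
  {l | ∀ i : Fin 6, 0 < pair i (l + ρ) ∧ pair i (l + ρ) < p}

/-- The alcove A₂ adjacent to A₁ across its upper wall. -/
def A2 (p : ℤ) : Set X :=
  {l | 0 < (l + ρ).2 ∧ (l + ρ).1 + 3 * (l + ρ).2 < p ∧ p < 2 * (l + ρ).1 + 3 * (l + ρ).2}

/-- Underlying map of the affine reflection s_{γᵢ,mp} (as a map on λ+ρ translated back: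
this is the map whose dot action is λ ↦ λ − (⟨λ+ρ,γᵢ∨⟩ − mp)γᵢ). -/
def reflFun (p : ℤ) (i : Fin 6) (m : ℤ) : X → X :=
  fun v => v - (pair i v - m * p) • root i

lemma pair_root (i : Fin 6) : pair i (root i) = 2 := by
  fin_cases i <;> rfl

lemma pair_sub (i : Fin 6) (a b : X) : pair i (a - b) = pair i a - pair i b := by
  simp [pair]; ring

lemma pair_smul (i : Fin 6) (c : ℤ) (a : X) : pair i (c • a) = c * pair i a := by
  simp [pair, Prod.smul_fst, Prod.smul_snd, smul_eq_mul]; ring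

lemma reflFun_invol (p : ℤ) (i : Fin 6) (m : ℤ) (v : X) :
    reflFun p i m (reflFun p i m v) = v := by
  simp only [reflFun, pair_sub, pair_smul, pair_root]
  have : pair i v - (pair i v - m * p) * 2 - m * p = -(pair i v - m * p) := by ring
  rw [this, neg_smul, sub_neg_eq_add, sub_add_cancel]

/-- The affine reflection s_{γᵢ,mp}, as a permutation of X (acting through the dot action). -/
def refl (p : ℤ) (i : Fin 6) (m : ℤ) : Equiv.Perm X :=
  ⟨reflFun p i m, reflFun p i m, reflFun_invol p i m, reflFun_invol p i m⟩

/-- The affine Weyl group W_p, generated by the affine reflections. -/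
def Wp (p : ℤ) : Subgroup (Equiv.Perm X) :=
  Subgroup.closure {g | ∃ (i : Fin 6) (m : ℤ), g = refl p i m}

/-!
Two distinct positive coroots of G₂ are the rows of an integer matrix whose determinant is one of
±1, ±2, ±3. If `p` is coprime to 6, this matrix is therefore invertible modulo `p`, and Cramer's
rule recovers both coordinates of a weight modulo `p` from its two pairings.
-/

open Matrix

lemma dvd_of_dvd_mulVec {R n : Type*} [CommRing R] [Fintype n] [DecidableEq n]
    {M : Matrix n n R} {p : R} (hM : IsCoprime p M.det) {v : n → R}
    (h : ∀ i, p ∣ (M *ᵥ v) i) (i : n) : p ∣ v i := by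
  have det_smul_eq : M.det • v = M.adjugate *ᵥ (M *ᵥ v) := by
    rw [mulVec_mulVec, adjugate_mul, smul_mulVec, one_mulVec]
  have dvd_det_mul : p ∣ M.det * v i := by
    rw [← smul_eq_mul, ← Pi.smul_apply, det_smul_eq]
    exact Finset.dvd_sum fun j _ => (h j).mul_left _
  exact hM.dvd_of_dvd_mul_left dvd_det_mul

lemma exists_eq_smul_iff_dvd_fst_and_dvd_snd {S : Type*} [Semigroup S] {p : S} {v : S × S} :
    (∃ μ : S × S, v = p • μ) ↔ p ∣ v.1 ∧ p ∣ v.2 := by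
  simp only [Prod.exists, Prod.ext_iff, Prod.smul_fst, Prod.smul_snd, smul_eq_mul,
    exists_and_left, exists_and_right, dvd_def]

lemma isCoprime_six_of_prime {p : ℤ} (hp : Prime p) (hp3 : 3 < p) : IsCoprime p 6 := by
  refine hp.irreducible.coprime_iff_not_dvd.mpr fun h => ?_
  rcases hp.dvd_or_dvd (show p ∣ 2 * 3 from h) with h2 | h3
  · linarith [Int.le_of_dvd two_pos h2]
  · linarith [Int.le_of_dvd three_pos h3]

/-- The matrix of the linear map `v ↦ (⟨v, γᵢ∨⟩, ⟨v, γⱼ∨⟩)` in fundamental-weight coordinates;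
its rows are the coefficient vectors of the two coroots. -/
def corootMatrix (i j : Fin 6) : Matrix (Fin 2) (Fin 2) ℤ :=
  !![(coroot i).1, (coroot i).2; (coroot j).1, (coroot j).2]

lemma corootMatrix_mulVec (i j : Fin 6) (v : X) :
    corootMatrix i j *ᵥ ![v.1, v.2] = ![pair i v, pair j v] := by
  ext m
  fin_cases m <;> simp [corootMatrix, pair, mulVec]

lemma det_corootMatrix_dvd_six {i j : Fin 6} (hij : i ≠ j) : (corootMatrix i j).det ∣ 6 := by
  rw [corootMatrix, det_fin_two_of]
  revert i j
  decide

theorem statement3_general {p : ℤ} (hp : IsCoprime p 6) (v : X) {i j : Fin 6} (hij : i ≠ j)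
    (hi : p ∣ pair i v) (hj : p ∣ pair j v) :
    (∀ k, p ∣ pair k v) ∧ ∃ μ : X, v = p • μ := by
  have hdet : IsCoprime p (corootMatrix i j).det :=
    hp.of_isCoprime_of_dvd_right (det_corootMatrix_dvd_six hij)
  have hcoord : ∀ m, p ∣ ![v.1, v.2] m := by
    refine dvd_of_dvd_mulVec hdet ?_
    rw [corootMatrix_mulVec, Fin.forall_fin_two]
    exact ⟨hi, hj⟩
  obtain ⟨μ, rfl⟩ := exists_eq_smul_iff_dvd_fst_and_dvd_snd.mpr ⟨hcoord 0, hcoord 1⟩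
  exact ⟨fun k => ⟨pair k μ, pair_smul k p μ⟩, μ, rfl⟩

/-- For a prime p > 5, if two distinct positive roots γ₁ ≠ γ₂ satisfy
p ∣ ⟨λ+ρ,γᵢ∨⟩ then p divides all six coroot pairings of λ+ρ; equivalently
λ + ρ ∈ pX, i.e. λ is special. -/
theorem statement3 (p : ℤ) (hp : Prime p) (hp5 : 5 < p) (l : X)
    (i j : Fin 6) (hij : i ≠ j)
    (hi : p ∣ pair i (l + ρ)) (hj : p ∣ pair j (l + ρ)) :
    (∀ k : Fin 6, p ∣ pair k (l + ρ)) ∧ ∃ μ : X, l + ρ = p • μ :=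
  statement3_general (isCoprime_six_of_prime hp (by linarith)) (l + ρ) hij hi hj

end G2
end

section
/- Let p > 5 be a prime and let λ ∈ X⁺ be a dominant weight with ⟨λ+ρ, (3α+2β)∨⟩ = p (a weight on the wall F₃/₄). Then λ is minimal among dominant weights with respect to the strong linkage relation at p: every μ ∈ X⁺ with μ ↑ λ satisfies μ = λ. -/
namespace G2

/-- μ ≤ λ : λ − μ is a nonnegative integer combination of the simple roots α, β. -/
def rootLe (μ l : X) : Prop :=
  ∃ a b : ℕ, l - μ = (a : ℤ) • root 0 + (b : ℤ) • root 1

/-- One step of strong linkage: μ is related to s_{γ,mp}·μ whenever μ ≤ s_{γ,mp}·μ. -/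
def linkStep (p : ℤ) (μ l : X) : Prop :=
  (∃ (i : Fin 6) (m : ℤ), l = dot (refl p i m) μ) ∧ rootLe μ l

/-- The strong linkage relation μ ↑ λ: reflexive–transitive closure of `linkStep`. -/
def strongLink (p : ℤ) : X → X → Prop := Relation.ReflTransGen (linkStep p)

/-!
On the wall, `λ + ρ = (p - 2y, y)` is congruent modulo `pX` to `y` times the short root `-α`.
Affine reflections act modulo `pX` as finite ones, which permute the short roots, so every
element of `W_p·λ`, shifted by `ρ`, is congruent to `y` times some short root. If `μ + ρ` is such
a weight, strictly dominant, with `μ ≤ λ`, then `⟨μ + ρ, (3α+2β)∨⟩ ≤ p`, and in this triangle the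
only solution of the congruences is `λ + ρ`. This gives minimality already for the order `≤` on the
whole dot orbit.
-/

lemma dot_add_rho (w : Equiv.Perm X) (l : X) : dot w l + ρ = w (l + ρ) :=
  sub_add_cancel _ _

lemma dot_one (l : X) : dot 1 l = l :=
  add_sub_cancel_right _ _

lemma dot_mul (w₁ w₂ : Equiv.Perm X) (l : X) : dot (w₁ * w₂) l = dot w₁ (dot w₂ l) := by
  rw [dot, dot, dot_add_rho, Equiv.Perm.mul_apply]

lemma dominant.add_rho_pos {l : X} (h : dominant l) : 0 < (l + ρ).1 ∧ 0 < (l + ρ).2 :=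
  ⟨Int.lt_add_one_of_le h.1, Int.lt_add_one_of_le h.2⟩

lemma refl_mem_Wp (p : ℤ) (i : Fin 6) (m : ℤ) : refl p i m ∈ Wp p :=
  Subgroup.subset_closure ⟨i, m, rfl⟩

lemma refl_mul_self (p : ℤ) (i : Fin 6) (m : ℤ) : refl p i m * refl p i m = 1 :=
  Equiv.ext (reflFun_invol p i m)

lemma rootLe_refl (l : X) : rootLe l l :=
  ⟨0, 0, by simp⟩

lemma rootLe.trans {κ μ l : X} (hκμ : rootLe κ μ) (hμl : rootLe μ l) : rootLe κ l := by
  obtain ⟨a, b, hab⟩ := hκμ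
  obtain ⟨c, d, hcd⟩ := hμl
  refine ⟨c + a, d + b, ?_⟩
  rw [← sub_add_sub_cancel l μ κ, hab, hcd]
  push_cast
  module

lemma rootLe.add_right {μ l : X} (h : rootLe μ l) (ν : X) : rootLe (μ + ν) (l + ν) := by
  simpa only [rootLe, add_sub_add_right_eq_sub] using h

/- The root 3α+2β equals ω_β, so it is dominant and its coroot is nonnegative on simple roots. -/
lemma rootLe.pair_five_le {μ l : X} (h : rootLe μ l) : pair 5 μ ≤ pair 5 l := by
  obtain ⟨a, b, hab⟩ := h
  have hpair : pair 5 l - pair 5 μ = b := by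
    rw [← pair_sub, hab]
    simp only [pair, coroot, root, Fin.isValue, Matrix.cons_val, Prod.smul_mk, Prod.mk_add_mk,
      smul_eq_mul]
    ring
  lia

lemma strongLink.rootLe {p : ℤ} {μ l : X} (h : strongLink p μ l) : rootLe μ l := by
  induction h with
  | refl => exact rootLe_refl μ
  | tail _ hstep ih => exact ih.trans hstep.2

lemma strongLink.exists_eq_dot {p : ℤ} {μ l : X} (h : strongLink p μ l) :
    ∃ w ∈ Wp p, μ = dot w l := by
  induction h with
  | refl => exact ⟨1, one_mem _, (dot_one μ).symm⟩
  | tail _ hstep ih =>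
    obtain ⟨⟨i, m, rfl⟩, -⟩ := hstep
    obtain ⟨w, hw, hμ⟩ := ih
    refine ⟨w * refl p i m, mul_mem hw (refl_mem_Wp p i m), ?_⟩
    rw [← dot_mul, mul_assoc, refl_mul_self, mul_one, hμ]

/-- The short roots of G₂, namely ±α, ±(α+β) and ±(2α+β); they form a single Weyl group orbit. -/
def shortRoots : Finset X := {root 0, -root 0, root 2, -root 2, root 3, -root 3}

lemma sub_pair_smul_root_mem_shortRoots :
    ∀ i : Fin 6, ∀ r ∈ shortRoots, r - pair i r • root i ∈ shortRoots := by
  decide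

/-- The weights congruent modulo `pX` to `c` times a short root. It is a union of `Wp p`-orbits
for the undotted action, so it is meant to contain shifted weights `λ + ρ`. -/
def shortRootCosets (p c : ℤ) : Set X :=
  {v | ∃ r ∈ shortRoots, ∃ κ : X, v = c • r + p • κ}

lemma reflFun_smul_add_smul (p c m : ℤ) (i : Fin 6) (r κ : X) :
    reflFun p i m (c • r + p • κ) =
      c • (r - pair i r • root i) + p • (κ - (pair i κ - m) • root i) := by
  ext <;> simp [reflFun, pair] <;> ring

lemma reflFun_mem_shortRootCosets {p c : ℤ} {v : X} (i : Fin 6) (m : ℤ)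
    (hv : v ∈ shortRootCosets p c) : reflFun p i m v ∈ shortRootCosets p c := by
  obtain ⟨r, hr, κ, rfl⟩ := hv
  exact ⟨_, sub_pair_smul_root_mem_shortRoots i r hr, _, reflFun_smul_add_smul p c m i r κ⟩

lemma apply_mem_shortRootCosets_iff {p c : ℤ} {w : Equiv.Perm X} (hw : w ∈ Wp p) (v : X) :
    w v ∈ shortRootCosets p c ↔ v ∈ shortRootCosets p c := by
  induction hw using Subgroup.closure_induction generalizing v with
  | mem g hg =>
    obtain ⟨i, m, rfl⟩ := hg
    refine ⟨fun h => ?_, reflFun_mem_shortRootCosets i m⟩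
    exact reflFun_invol p i m v ▸ reflFun_mem_shortRootCosets i m h
  | one => rfl
  | mul g₁ g₂ _ _ ih₁ ih₂ => exact (ih₁ (g₂ v)).trans (ih₂ v)
  | inv g _ ih => rw [← ih, ← Equiv.Perm.mul_apply, mul_inv_cancel, Equiv.Perm.one_apply]

lemma wall_mem_shortRootCosets (p y : ℤ) : (p - 2 * y, y) ∈ shortRootCosets p y := by
  refine ⟨-root 0, by decide, (1, 0), ?_⟩
  ext
  · simp [root]
    ring
  · simp [root]

lemma snd_eq_or_eq_of_mem_shortRoots :
    ∀ r ∈ shortRoots, r.2 = -1 ∨ r.2 = 0 ∨ r = -root 0 ∨ r = root 2 := by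
  decide

/- As `2 * v.2 < p`, the congruence for the second coordinate forces `v.2 = y` and `r = -α` or
`r = α+β`; the first coordinate then excludes `r = α+β`. -/
lemma eq_wall_of_mem_shortRootCosets {p y : ℤ} {v : X} (hv : v ∈ shortRootCosets p y)
    (hy : 0 < y) (hyp : 2 * y < p) (hv₁ : 0 < v.1) (hv₂ : 0 < v.2) (hv₅ : pair 5 v ≤ p) :
    v = (p - 2 * y, y) := by
  obtain ⟨r, hr, κ, hκ⟩ := hv
  obtain ⟨a, b⟩ := v
  have hle : a + 2 * b ≤ p := by simpa [pair, coroot] using hv₅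
  have hdvd₁ : p ∣ a - y * r.1 := ⟨κ.1, by simpa using sub_eq_of_eq_add' (congrArg Prod.fst hκ)⟩
  have hdvd₂ : p ∣ b - y * r.2 := ⟨κ.2, by simpa using sub_eq_of_eq_add' (congrArg Prod.snd hκ)⟩
  have eq_zero_of_dvd {x : ℤ} (hx : p ∣ x) (hlo : -p < x) (hhi : x < p) : x = 0 :=
    Int.eq_zero_of_abs_lt_dvd hx (abs_lt.mpr ⟨hlo, hhi⟩)
  have hb_of_one (hr₂ : r.2 = 1) : b = y := by
    rw [hr₂, mul_one] at hdvd₂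
    linarith [eq_zero_of_dvd hdvd₂ (by linarith) (by linarith)]
  rcases snd_eq_or_eq_of_mem_shortRoots r hr with hr₂ | hr₂ | rfl | rfl
  · rw [hr₂] at hdvd₂
    linarith [eq_zero_of_dvd hdvd₂ (by linarith) (by linarith)]
  · rw [hr₂] at hdvd₂
    linarith [eq_zero_of_dvd hdvd₂ (by linarith) (by linarith)]
  · obtain rfl : b = y := hb_of_one rfl
    have hdvd : p ∣ a - (p - 2 * b) := by
      have hsub : a - (p - 2 * b) = a - b * (-root 0).1 - p := by
        simp [root]
        ring
      exact hsub ▸ dvd_sub_self_right.mpr hdvd₁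
    exact Prod.ext (by linarith [eq_zero_of_dvd hdvd (by linarith) (by linarith)]) rfl
  · obtain rfl : b = y := hb_of_one rfl
    have hdvd : p ∣ a + b := by simpa [root] using hdvd₁
    linarith [eq_zero_of_dvd hdvd (by linarith) (by linarith)]

theorem statement8_general (p : ℤ) (l : X) (hdom : dominant l) (hwall : pair 5 (l + ρ) = p) :
    ∀ μ : X, dominant μ → ∀ w ∈ Wp p, μ = dot w l → rootLe μ l → μ = l := by
  intro μ hμdom w hw hμ hle
  obtain ⟨hl₁, hl₂⟩ := hdom.add_rho_pos
  obtain ⟨hμ₁, hμ₂⟩ := hμdom.add_rho_pos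
  have hsum : (l + ρ).1 + 2 * (l + ρ).2 = p := by simpa [pair, coroot] using hwall
  have hl : l + ρ = (p - 2 * (l + ρ).2, (l + ρ).2) := Prod.ext (by linarith) rfl
  have hmem : μ + ρ ∈ shortRootCosets p (l + ρ).2 := by
    rw [hμ, dot_add_rho, apply_mem_shortRootCosets_iff hw, hl]
    exact wall_mem_shortRootCosets p _
  have hμ₅ : pair 5 (μ + ρ) ≤ p := hwall ▸ (hle.add_right ρ).pair_five_le
  have hμl : μ + ρ = (p - 2 * (l + ρ).2, (l + ρ).2) :=
    eq_wall_of_mem_shortRootCosets hmem hl₂ (by linarith) hμ₁ hμ₂ hμ₅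
  exact add_right_cancel (hμl.trans hl.symm)

/-- For a prime p > 5, any dominant weight λ with ⟨λ+ρ,(3α+2β)∨⟩ = p
(a weight on the wall F₃/₄) is minimal among dominant weights for strong linkage:
every dominant μ with μ ↑ λ equals λ. -/
theorem statement8 (p : ℤ) (hp : Prime p) (hp5 : 5 < p) (l : X)
    (hdom : dominant l) (hwall : pair 5 (l + ρ) = p) :
    ∀ μ : X, dominant μ → strongLink p μ l → μ = l := by
  intro μ hμ hlink
  obtain ⟨w, hw, hμl⟩ := hlink.exists_eq_dot
  exact statement8_general p l hdom hwall μ hμ w hw hμl hlink.rootLe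

end G2
end

section
/- Let p > 5 be a prime and put A = (2p²−p)ω_α − p²ω_β + A₂. Then A ⊆ p²·(−2ω_β) + X_{p²} and A ⊆ p²·(ω_α−ω_β) − X_{p²}; moreover for every integer r ≥ 3, A ⊆ pʳ·(−ω_α−2ω_β) + X_{pʳ} and A ⊆ pʳ·(−ω_β) − X_{pʳ}. -/
namespace G2

/-- The alcove A = (2p²−p)ω_α − p²ω_β + A₂. -/
def Aalc (p : ℤ) : Set X :=
  {l | ∃ a ∈ A2 p, l = ((2 * p ^ 2 - p, -(p ^ 2)) : X) + a}

/-! Both conditions `l ∈ m·μ + X_m` and `l ∈ m·(μ + ρ) − X_m` hold as soon as `l` lies strictly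
inside the box with opposite corners `m·μ` and `m·(μ + ρ)`, and the weights of the statement come
in such pairs: `ω_α − ω_β = −2ω_β + ρ` and `−ω_β = (−ω_α − 2ω_β) + ρ`. Moreover `A₂` lies in the
box of side `p` with lower corner `−ρ`, so after adding `ρ` its translate `A` lies in the box
`(2p² − p, 2p²) × (−p², −p² + p)`. This is contained in `(p², 2p²) × (−p², 0)`, and in
`(0, pʳ) × (−pʳ, 0)` once `2p² ≤ pʳ`. -/

lemma two_mul_sq_le_pow {R : Type*} [Semiring R] [PartialOrder R] [IsOrderedRing R] {a : R}
    {r : ℕ} (ha : 2 ≤ a) (hr : 3 ≤ r) : 2 * a ^ 2 ≤ a ^ r :=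
  have one_le_a : 1 ≤ a := one_le_two.trans ha
  have sq_nonneg_a : 0 ≤ a ^ 2 := pow_nonneg (zero_le_one.trans one_le_a) 2
  calc
    2 * a ^ 2 ≤ a * a ^ 2 := mul_le_mul_of_nonneg_right ha sq_nonneg_a
    _ = a ^ 3 := (pow_succ' a 2).symm
    _ ≤ a ^ r := pow_le_pow_right₀ one_le_a hr

lemma mdot_fst (m : ℤ) (μ : X) : (mdot m μ).1 = m * (μ.1 + 1) - 1 := rfl

lemma mdot_snd (m : ℤ) (μ : X) : (mdot m μ).2 = m * (μ.2 + 1) - 1 := rfl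

lemma mdot_add (m : ℤ) (μ ν : X) : mdot m (μ + ν) = mdot m μ + m • ν := by
  rw [mdot, mdot, add_right_comm, smul_add, add_sub_right_comm]

lemma mdot_add_rho (m : ℤ) (μ : X) : mdot m (μ + ρ) = mdot m μ + (m, m) := by
  simp [mdot_add, ρ]

lemma mem_Xpn_iff {p : ℤ} {n : ℕ} {σ : X} :
    σ ∈ Xpn p n ↔ (0 ≤ σ.1 ∧ σ.1 < p ^ n) ∧ 0 ≤ σ.2 ∧ σ.2 < p ^ n := by
  have pair_zero : pair 0 σ = σ.1 := by simp [pair, coroot]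
  have pair_one : pair 1 σ = σ.2 := by simp [pair, coroot]
  simp only [Xpn, dominant, Set.mem_ofPred_eq, pair_zero, pair_one]
  tauto

/-- The open box of side `m` with lower corner `m·μ`: the weights lying strictly between `m·μ` and
the opposite corner `m·(μ + ρ) = m·μ + mρ` in both coordinates. For `m = pⁿ` it is the
intersection of `m·μ + X_{pⁿ}` and `m·(μ + ρ) − X_{pⁿ}`. -/
def openBox (m : ℤ) (μ : X) : Set X :=
  Set.Ioo (mdot m μ).1 (mdot m (μ + ρ)).1 ×ˢ Set.Ioo (mdot m μ).2 (mdot m (μ + ρ)).2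

lemma mem_openBox_iff {m : ℤ} {μ l : X} :
    l ∈ openBox m μ ↔
      ((mdot m μ).1 < l.1 ∧ l.1 < (mdot m μ).1 + m) ∧
        (mdot m μ).2 < l.2 ∧ l.2 < (mdot m μ).2 + m := by
  simp only [openBox, mdot_add_rho, Set.mem_prod, Set.mem_Ioo, Prod.fst_add, Prod.snd_add]

lemma openBox_subset_openBox {m n : ℤ} {μ ν : X} (hlower : mdot n ν ≤ mdot m μ)
    (hupper : mdot m (μ + ρ) ≤ mdot n (ν + ρ)) : openBox m μ ⊆ openBox n ν :=
  Set.prod_mono (Set.Ioo_subset_Ioo hlower.1 hupper.1) (Set.Ioo_subset_Ioo hlower.2 hupper.2)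

lemma smul_add_mem_openBox {m : ℤ} {μ l : X} (ν : X) (hl : l ∈ openBox m μ) :
    m • ν + l ∈ openBox m (μ + ν) := by
  simp only [mem_openBox_iff, mdot_add, Prod.fst_add, Prod.snd_add] at hl ⊢
  omega

lemma exists_eq_mdot_add_of_mem_openBox {p : ℤ} {n : ℕ} {μ l : X} (hl : l ∈ openBox (p ^ n) μ) :
    ∃ σ ∈ Xpn p n, l = mdot (p ^ n) μ + σ := by
  refine ⟨l - mdot (p ^ n) μ, ?_, (add_sub_cancel _ _).symm⟩
  rw [mem_openBox_iff] at hl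
  rw [mem_Xpn_iff, Prod.fst_sub, Prod.snd_sub]
  omega

lemma exists_eq_mdot_sub_of_mem_openBox {p : ℤ} {n : ℕ} {μ l : X} (hl : l ∈ openBox (p ^ n) μ) :
    ∃ σ ∈ Xpn p n, l = mdot (p ^ n) (μ + ρ) - σ := by
  refine ⟨mdot (p ^ n) (μ + ρ) - l, ?_, (sub_sub_cancel _ _).symm⟩
  rw [mem_openBox_iff] at hl
  simp only [mem_Xpn_iff, mdot_add_rho, Prod.fst_sub, Prod.snd_sub, Prod.fst_add, Prod.snd_add]
  omega

lemma five_lt_of_mem_A2 {p : ℤ} {a : X} (ha : a ∈ A2 p) : 5 < p := by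
  obtain ⟨_, _, _⟩ := ha
  omega

lemma A2_subset_openBox (p : ℤ) : A2 p ⊆ openBox p (-ρ) := by
  rintro a ⟨hβ, hlt, hgt⟩
  have hcorner : mdot p (-ρ) = (-1, -1) := by simp [mdot, ρ]
  simp only [ρ, Prod.fst_add, Prod.snd_add] at hβ hlt hgt
  simp only [mem_openBox_iff, hcorner]
  omega

lemma Aalc_subset_openBox (p : ℤ) : Aalc p ⊆ openBox p (2 * p - 2, -p - 1) := by
  rintro _ ⟨a, ha, rfl⟩
  have hshift : ((2 * p ^ 2 - p, -(p ^ 2)) : X) = p • (2 * p - 1, -p) :=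
    Prod.ext (show 2 * p ^ 2 - p = p * (2 * p - 1) by ring) (show -(p ^ 2) = p * -p by ring)
  have hcorner : ((2 * p - 2, -p - 1) : X) = -ρ + (2 * p - 1, -p) :=
    Prod.ext (show 2 * p - 2 = -1 + (2 * p - 1) by ring) (show -p - 1 = -1 + -p by ring)
  rw [hshift, hcorner]
  exact smul_add_mem_openBox _ (A2_subset_openBox p ha)

lemma Aalc_subset_openBox_sq (p : ℤ) : Aalc p ⊆ openBox (p ^ 2) (0, -2) := by
  have hp : p ≤ p ^ 2 := Int.le_self_sq p
  have hlower : mdot (p ^ 2) (0, -2) ≤ mdot p (2 * p - 2, -p - 1) := by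
    constructor <;> simp only [mdot_fst, mdot_snd] <;> linarith
  have hupper : mdot p ((2 * p - 2, -p - 1) + ρ) ≤ mdot (p ^ 2) ((0, -2) + ρ) := by
    constructor <;> simp only [mdot_fst, mdot_snd, ρ, Prod.fst_add, Prod.snd_add] <;> linarith
  exact (Aalc_subset_openBox p).trans (openBox_subset_openBox hlower hupper)

lemma Aalc_subset_openBox_of_two_mul_sq_le {p m : ℤ} (hm : 2 * p ^ 2 ≤ m) :
    Aalc p ⊆ openBox m (-1, -2) := by
  have hp : p ≤ p ^ 2 := Int.le_self_sq p
  have hlower : mdot m (-1, -2) ≤ mdot p (2 * p - 2, -p - 1) := by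
    constructor <;> simp only [mdot_fst, mdot_snd] <;> linarith [sq_nonneg p]
  have hupper : mdot p ((2 * p - 2, -p - 1) + ρ) ≤ mdot m ((-1, -2) + ρ) := by
    constructor <;> simp only [mdot_fst, mdot_snd, ρ, Prod.fst_add, Prod.snd_add] <;> linarith
  exact (Aalc_subset_openBox p).trans (openBox_subset_openBox hlower hupper)

lemma Aalc_subset_openBox_pow (p : ℤ) {r : ℕ} (hr : 3 ≤ r) :
    Aalc p ⊆ openBox (p ^ r) (-1, -2) := by
  rintro _ ⟨a, ha, rfl⟩
  have hp : 5 < p := five_lt_of_mem_A2 ha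
  have hsq : 2 * p ^ 2 ≤ p ^ r := two_mul_sq_le_pow (by omega) hr
  exact Aalc_subset_openBox_of_two_mul_sq_le hsq ⟨a, ha, rfl⟩

theorem statement10_general (p : ℤ) :
    (∀ l ∈ Aalc p, ∃ σ ∈ Xpn p 2, l = mdot (p ^ 2) ((0, -2) : X) + σ) ∧
    (∀ l ∈ Aalc p, ∃ σ ∈ Xpn p 2, l = mdot (p ^ 2) ((1, -1) : X) - σ) ∧
    (∀ r : ℕ, 3 ≤ r →
      (∀ l ∈ Aalc p, ∃ σ ∈ Xpn p r, l = mdot (p ^ r) ((-1, -2) : X) + σ) ∧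
      (∀ l ∈ Aalc p, ∃ σ ∈ Xpn p r, l = mdot (p ^ r) ((0, -1) : X) - σ)) :=
  ⟨fun _ hl => exists_eq_mdot_add_of_mem_openBox (Aalc_subset_openBox_sq p hl),
    fun _ hl => exists_eq_mdot_sub_of_mem_openBox (Aalc_subset_openBox_sq p hl),
    fun _ hr =>
      ⟨fun _ hl => exists_eq_mdot_add_of_mem_openBox (Aalc_subset_openBox_pow p hr hl),
        fun _ hl => exists_eq_mdot_sub_of_mem_openBox (Aalc_subset_openBox_pow p hr hl)⟩⟩

/-- For a prime p > 5 and A = (2p²−p)ω_α − p²ω_β + A₂: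
A ⊆ p²·(−2ω_β) + X_{p²}, A ⊆ p²·(ω_α−ω_β) − X_{p²}, and for every r ≥ 3,
A ⊆ pʳ·(−ω_α−2ω_β) + X_{pʳ} and A ⊆ pʳ·(−ω_β) − X_{pʳ}. -/
theorem statement10 (p : ℤ) (hp : Prime p) (hp5 : 5 < p) :
    (∀ l ∈ Aalc p, ∃ σ ∈ Xpn p 2, l = mdot (p ^ 2) ((0, -2) : X) + σ) ∧
    (∀ l ∈ Aalc p, ∃ σ ∈ Xpn p 2, l = mdot (p ^ 2) ((1, -1) : X) - σ) ∧
    (∀ r : ℕ, 3 ≤ r →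
      (∀ l ∈ Aalc p, ∃ σ ∈ Xpn p r, l = mdot (p ^ r) ((-1, -2) : X) + σ) ∧
      (∀ l ∈ Aalc p, ∃ σ ∈ Xpn p r, l = mdot (p ^ r) ((0, -1) : X) - σ)) :=
  statement10_general p

end G2
end
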